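/- arXiv:1402.1703 — 5 statements merged into one kernel-verified Lean document; each statement's English description precedes it below -/
import Mathlib

section
/- Let q ≥ 1 be an integer and b : ℕ × ℕ → ℂ be given. For any prescribed values μ(i,j) ∈ ℂ for i ∈ {0,1} and 0 ≤ j ≤ q+1−i, there exists a unique family λ(i,j) ∈ ℂ, indexed by (i,j) ∈ ℕ² with 0 ≤ i+j ≤ q+1, that satisfies the GPW system and the constraints λ(i,j) = μ(i,j) for all i ∈ {0,1} and 0 ≤ j ≤ q+1−i. Moreover this unique solution is given by the explicit induction formula: for all (i,j) with i+j ≤ q−1, λ(i+2,j) = (1/((i+2)(i+1))) · ( b(i,j) − (j+2)(j+1)λ(i,j+2) − Σ_{k=0}^{i} Σ_{l=0}^{j} (i−k+1)(k+1) λ(i−k+1, j−l) λ(k+1, l) − Σ_{k=0}^{j} Σ_{l=0}^{i} (j−k+1)(k+1) λ(i−l, j−k+1) λ(l, k+1) ). -/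
noncomputable section

/-- The GPW system: the nonlinear system on the coefficients `lam` arising from matching the
Taylor expansion of `β - P_Δ` at `G` up to order `q`, where `b (i,j) = ∂ₓ^i ∂_y^j β(G)/(i!j!)`. -/
def gpwSystem (q : ℕ) (b lam : ℕ × ℕ → ℂ) : Prop :=
  ∀ i j : ℕ, i + j + 1 ≤ q →
    b (i, j) =
      (((i + 2) * (i + 1) : ℕ) : ℂ) * lam (i + 2, j)
        + (((j + 2) * (j + 1) : ℕ) : ℂ) * lam (i, j + 2)
        + ∑ k ∈ Finset.range (i + 1), ∑ l ∈ Finset.range (j + 1),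
            (((i - k + 1) * (k + 1) : ℕ) : ℂ) * lam (i - k + 1, j - l) * lam (k + 1, l)
        + ∑ k ∈ Finset.range (j + 1), ∑ l ∈ Finset.range (i + 1),
            (((j - k + 1) * (k + 1) : ℕ) : ℂ) * lam (i - l, j - k + 1) * lam (l, k + 1)

/-! The equation of index `(i, j)` is linear in `lam (i + 2, j)` with nonzero coefficient, and its
other terms only involve cells `(a, c)` with `a < i + 2` and `a + c ≤ (i + 2) + j`. Solved for
`lam (i + 2, j)`, the system is thus a fixed-point equation for a map whose value at a cell depends
only on strictly earlier rows: well-founded recursion yields a solution, and since the dependence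
never leaves the triangle `a + c ≤ q + 1`, the solution is determined there. -/

section WellFoundedFixedPoint

variable {ι : Type*} {α : ι → Type*} {r : ι → ι → Prop} {F : (∀ i, α i) → ∀ i, α i}

theorem exists_isFixedPt_of_dependsOn_wellFounded [∀ i, Nonempty (α i)] (hr : WellFounded r)
    (hF : ∀ x, DependsOn (F · x) {y | r y x}) : ∃ f, Function.IsFixedPt F f := by
  classical
  let extend (x : ι) (f : ∀ y, r y x → α y) (y : ι) : α y :=
    if h : r y x then f y h else Classical.arbitrary (α y)
  refine ⟨hr.fix fun x f => F (extend x f) x, funext fun x => ?_⟩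
  rw [hr.fix_eq]
  exact hF x fun y hy => Eq.symm (dif_pos (show r y x from hy))

theorem eq_of_dependsOn_wellFounded {s : Set ι} {f g : ∀ i, α i} (hr : WellFounded r)
    (hF : ∀ x ∈ s, DependsOn (F · x) {y | r y x}) (hs : ∀ x ∈ s, ∀ y, r y x → y ∈ s)
    (hf : ∀ x ∈ s, F f x = f x) (hg : ∀ x ∈ s, F g x = g x) : ∀ x ∈ s, f x = g x := by
  intro x
  induction x using hr.induction with
  | _ x ih =>
    intro hx
    rw [← hf x hx, ← hg x hx]
    exact hF x hx fun y hy => ih y hy (hs x hx y hy)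

end WellFoundedFixedPoint

/-- The coefficient of `x ^ i * y ^ j` in `(∂ₓ φ) ^ 2`, where `φ = ∑ lam (i, j) x ^ i y ^ j`.
The coefficient in `(∂_y φ) ^ 2` is obtained by exchanging the two variables, as
`derivSqCoeff (lam ∘ Prod.swap) j i`. -/
def derivSqCoeff {R : Type*} [Semiring R] (lam : ℕ × ℕ → R) (i j : ℕ) : R :=
  ∑ k ∈ Finset.range (i + 1), ∑ l ∈ Finset.range (j + 1),
    (((i - k + 1) * (k + 1) : ℕ) : R) * lam (i - k + 1, j - l) * lam (k + 1, l)

/-- The coefficient of `x ^ i * y ^ j` in `Δφ + (∂ₓ φ) ^ 2 + (∂_y φ) ^ 2`, where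
`φ = ∑ lam (i, j) x ^ i y ^ j`: the right-hand side of the GPW equation of index `(i, j)`. -/
def gpwCoeff {R : Type*} [Semiring R] (lam : ℕ × ℕ → R) (i j : ℕ) : R :=
  (((i + 2) * (i + 1) : ℕ) : R) * lam (i + 2, j) + (((j + 2) * (j + 1) : ℕ) : R) * lam (i, j + 2)
    + derivSqCoeff lam i j + derivSqCoeff (lam ∘ Prod.swap) j i

/-- The value that the GPW equation of index `(i, j)` prescribes for `lam (i + 2, j)`: the
right-hand side of the induction formula. -/
def gpwRecursion {K : Type*} [DivisionRing K] (b lam : ℕ × ℕ → K) (i j : ℕ) : K :=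
  (1 / (((i + 2) * (i + 1) : ℕ) : K)) *
    (b (i, j) - (((j + 2) * (j + 1) : ℕ) : K) * lam (i, j + 2)
      - derivSqCoeff lam i j - derivSqCoeff (lam ∘ Prod.swap) j i)

theorem eq_gpwCoeff_iff {K : Type*} [DivisionRing K] [CharZero K] {b lam : ℕ × ℕ → K} {i j : ℕ} :
    b (i, j) = gpwCoeff lam i j ↔ lam (i + 2, j) = gpwRecursion b lam i j := by
  have leading_ne_zero : (((i + 2) * (i + 1) : ℕ) : K) ≠ 0 := Nat.cast_ne_zero.mpr (by positivity)
  rw [gpwRecursion, one_div, eq_inv_mul_iff_mul_eq₀ leading_ne_zero, eq_sub_iff_add_eq,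
    eq_sub_iff_add_eq, eq_sub_iff_add_eq, eq_comm, gpwCoeff]
  congr! 1
  abel

theorem dependsOn_derivSqCoeff {R : Type*} [Semiring R] (i j : ℕ) :
    DependsOn (fun lam : ℕ × ℕ → R => derivSqCoeff lam i j) (Set.Iic (i + 1, j)) := by
  intro f g hfg
  refine Finset.sum_congr rfl fun k hk => Finset.sum_congr rfl fun l hl => ?_
  rw [Finset.mem_range] at hk hl
  rw [hfg (i - k + 1, j - l) ⟨by lia, by lia⟩, hfg (k + 1, l) ⟨by lia, by lia⟩]

/-- The cell `p` lies in an earlier row than `p'` and its total degree is at most that of `p'`. The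
GPW recursion computes a coefficient from cells preceding it in this sense. -/
def GPWPrecedes (p p' : ℕ × ℕ) : Prop :=
  p.1 < p'.1 ∧ p.1 + p.2 ≤ p'.1 + p'.2

theorem wellFounded_gpwPrecedes : WellFounded GPWPrecedes :=
  Subrelation.wf And.left (measure Prod.fst).wf

section Recursion

variable {K : Type*} [DivisionRing K] {b μ lam : ℕ × ℕ → K}

/-- The map whose fixed points are the families with first two rows `μ` that satisfy the GPW
recursion. -/
def gpwMap (b μ lam : ℕ × ℕ → K) : ℕ × ℕ → K
  | (0, j) => μ (0, j)
  | (1, j) => μ (1, j)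
  | (i + 2, j) => gpwRecursion b lam i j

theorem dependsOn_gpwRecursion (b : ℕ × ℕ → K) (i j : ℕ) :
    DependsOn (fun lam => gpwRecursion b lam i j) {p | GPWPrecedes p (i + 2, j)} := by
  intro f g hfg
  have eq_of_le {a c : ℕ} (ha : a < i + 2) (hac : a + c ≤ i + 2 + j) : f (a, c) = g (a, c) :=
    hfg (a, c) ⟨ha, hac⟩
  have hx : derivSqCoeff f i j = derivSqCoeff g i j :=
    dependsOn_derivSqCoeff i j fun _ ⟨ha, hc⟩ => eq_of_le (by lia) (by lia)
  have hy : derivSqCoeff (f ∘ Prod.swap) j i = derivSqCoeff (g ∘ Prod.swap) j i :=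
    dependsOn_derivSqCoeff j i fun _ ⟨hc, ha⟩ => eq_of_le (by lia) (by lia)
  simp only [gpwRecursion, hx, hy, eq_of_le (a := i) (c := j + 2) (by lia) (by lia)]

theorem dependsOn_gpwMap (b μ : ℕ × ℕ → K) (p : ℕ × ℕ) :
    DependsOn (fun lam => gpwMap b μ lam p) {p' | GPWPrecedes p' p} := by
  match p with
  | (0, _) | (1, _) => exact fun _ _ _ => rfl
  | (i + 2, j) => exact dependsOn_gpwRecursion b i j

theorem exists_isFixedPt_gpwMap (b μ : ℕ × ℕ → K) :
    ∃ lam, Function.IsFixedPt (gpwMap b μ) lam :=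
  exists_isFixedPt_of_dependsOn_wellFounded wellFounded_gpwPrecedes (dependsOn_gpwMap b μ)

theorem gpwMap_of_le_one {i j : ℕ} (hi : i ≤ 1) : gpwMap b μ lam (i, j) = μ (i, j) := by
  interval_cases i <;> rfl

theorem eq_of_gpwMap_eq {n : ℕ} {lam' : ℕ × ℕ → K}
    (h : ∀ p : ℕ × ℕ, p.1 + p.2 ≤ n → gpwMap b μ lam p = lam p)
    (h' : ∀ p : ℕ × ℕ, p.1 + p.2 ≤ n → gpwMap b μ lam' p = lam' p) :
    ∀ p : ℕ × ℕ, p.1 + p.2 ≤ n → lam p = lam' p :=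
  eq_of_dependsOn_wellFounded (s := {p : ℕ × ℕ | p.1 + p.2 ≤ n}) wellFounded_gpwPrecedes
    (fun p _ => dependsOn_gpwMap b μ p) (fun _ hp _ hlt => hlt.2.trans hp) h h'

theorem gpwMap_eq_of_eq_gpwCoeff [CharZero K] {q : ℕ}
    (hsys : ∀ i j : ℕ, i + j + 1 ≤ q → b (i, j) = gpwCoeff lam i j)
    (hinit : ∀ i j : ℕ, i ≤ 1 → i + j ≤ q + 1 → lam (i, j) = μ (i, j)) :
    ∀ p : ℕ × ℕ, p.1 + p.2 ≤ q + 1 → gpwMap b μ lam p = lam p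
  | (0, j), hp => (hinit 0 j zero_le_one hp).symm
  | (1, j), hp => (hinit 1 j le_rfl hp).symm
  | (i + 2, j), hp => (eq_gpwCoeff_iff.mp (hsys i j (by lia))).symm

theorem gpw_system_exists_unique_general [CharZero K] (b μ : ℕ × ℕ → K) :
    ∃ lam : ℕ × ℕ → K,
      (∀ i j : ℕ, b (i, j) = gpwCoeff lam i j) ∧
      (∀ i j : ℕ, i ≤ 1 → lam (i, j) = μ (i, j)) ∧
      (∀ i j : ℕ, lam (i + 2, j) = gpwRecursion b lam i j) ∧
      ∀ (q : ℕ) (lam' : ℕ × ℕ → K),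
        (∀ i j : ℕ, i + j + 1 ≤ q → b (i, j) = gpwCoeff lam' i j) →
        (∀ i j : ℕ, i ≤ 1 → i + j ≤ q + 1 → lam' (i, j) = μ (i, j)) →
        ∀ i j : ℕ, i + j ≤ q + 1 → lam' (i, j) = lam (i, j) := by
  obtain ⟨lam, hlam⟩ := exists_isFixedPt_gpwMap b μ
  have hrec (i j : ℕ) : lam (i + 2, j) = gpwRecursion b lam i j := (congr_fun hlam (i + 2, j)).symm
  have hinit (i j : ℕ) (hi : i ≤ 1) : lam (i, j) = μ (i, j) :=
    (congr_fun hlam (i, j)).symm.trans (gpwMap_of_le_one hi)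
  refine ⟨lam, fun i j => eq_gpwCoeff_iff.mpr (hrec i j), hinit, hrec, ?_⟩
  intro q lam' hsys' hinit' i j hij
  exact eq_of_gpwMap_eq (gpwMap_eq_of_eq_gpwCoeff hsys' hinit') (fun p _ => congr_fun hlam p)
    (i, j) hij

end Recursion

/-- For any prescribed values `μ (i,j)`, `i ∈ {0,1}`, `0 ≤ j ≤ q+1-i`, there is a unique family
`lam (i,j)`, `0 ≤ i + j ≤ q+1`, satisfying the GPW system together with the constraints
`lam (i,j) = μ (i,j)` for `i ∈ {0,1}`, `0 ≤ j ≤ q+1-i`; it is given by the explicit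
induction formula. -/
theorem gpw_system_exists_unique (q : ℕ) (hq : 1 ≤ q) (b μ : ℕ × ℕ → ℂ) :
    ∃ lam : ℕ × ℕ → ℂ,
      (gpwSystem q b lam ∧
        (∀ i j : ℕ, i ≤ 1 → i + j ≤ q + 1 → lam (i, j) = μ (i, j)) ∧
        (∀ i j : ℕ, i + j + 1 ≤ q →
          lam (i + 2, j) =
            (1 / (((i + 2) * (i + 1) : ℕ) : ℂ)) *
              (b (i, j) - (((j + 2) * (j + 1) : ℕ) : ℂ) * lam (i, j + 2)
                - ∑ k ∈ Finset.range (i + 1), ∑ l ∈ Finset.range (j + 1),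
                    (((i - k + 1) * (k + 1) : ℕ) : ℂ) * lam (i - k + 1, j - l) * lam (k + 1, l)
                - ∑ k ∈ Finset.range (j + 1), ∑ l ∈ Finset.range (i + 1),
                    (((j - k + 1) * (k + 1) : ℕ) : ℂ) * lam (i - l, j - k + 1) * lam (l, k + 1)))) ∧
      ∀ lam' : ℕ × ℕ → ℂ,
        gpwSystem q b lam' →
        (∀ i j : ℕ, i ≤ 1 → i + j ≤ q + 1 → lam' (i, j) = μ (i, j)) →
        ∀ i j : ℕ, i + j ≤ q + 1 → lam' (i, j) = lam (i, j) := by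
  obtain ⟨lam, hsys, hinit, hrec, hunique⟩ := gpw_system_exists_unique_general b μ
  exact ⟨lam, ⟨fun i j _ => hsys i j, fun i j hi _ => hinit i j hi, fun i j _ => hrec i j⟩,
    hunique q⟩
end
end

section
/- Let q ≥ 1, b : ℕ × ℕ → ℂ, and N ∈ ℂ with N ≠ 0. There exists a family of bivariate polynomials R(i,j) ∈ ℂ[X,Y], indexed by (i,j) with i ≥ 2 and i + j ≤ q + 1, whose coefficients depend only on N, q and b (in particular not on θ), such that the total degree of R(i,j) is at most i − 2 and, for every θ ∈ ℝ, the unique solution λ of the GPW system under the GPW normalization with direction θ satisfies λ(i,j) = R(i,j)(N cos θ, N sin θ) for all such (i,j). -/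
noncomputable section

/-- The GPW normalization: `lam (0,0) = 0`, `(lam (1,0), lam (0,1)) = N (cos θ, sin θ)`, and
`lam (i,j) = 0` for `i ∈ {0,1}` and `1 < i + j ≤ q + 1`. -/
def gpwNormalized (q : ℕ) (N : ℂ) (θ : ℝ) (lam : ℕ × ℕ → ℂ) : Prop :=
  lam (0, 0) = 0 ∧ lam (1, 0) = N * Real.cos θ ∧ lam (0, 1) = N * Real.sin θ ∧
    ∀ i j : ℕ, i ≤ 1 → 1 < i + j → i + j ≤ q + 1 → lam (i, j) = 0

/-!
Matching Taylor coefficients expresses `lam (i + 2, j)` through `b (i, j)`, `lam (i, j + 2)` and the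
coefficient of `xⁱyʲ` in `(∂ₓP)² + (∂_yP)²`, where `P = ∑ lam (i, j) xⁱyʲ`; these involve only
columns `lam (a, ·)` with `a ≤ i + 1`. Running the same recursion on polynomials in two variables
standing for `lam (1, 0)` and `lam (0, 1)` gives the family `R`.

For the degree bound, give `lam (1, 0)` and `lam (0, 1)` weight `1` and every other `lam (i, j)`
weight `i - 2`, where negative weight means vanishing. The quadratic term has weight at most `i`
except for `(i, j) = (0, 0)`, where both factors have order one; there it equals
`lam (1, 0) ^ 2 + lam (0, 1) ^ 2`, which is the constant `N ^ 2` whatever the direction.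
-/

open Finset MvPolynomial

section GradSqCoeff

variable {A B : Type*} [CommSemiring A] [CommSemiring B]

/-- The coefficient of `xⁱyʲ` in `(∂ₓP)² + (∂_yP)²`, where `P` is the power series with coefficients
`f`: the nonlinear part of the GPW system. Indexing by antidiagonals avoids the truncated
subtractions of `gpwSystem`. -/
def gradSqCoeff (f : ℕ × ℕ → A) (i j : ℕ) : A :=
  ∑ a ∈ antidiagonal i, ∑ m ∈ antidiagonal j,
      ((a.1 + 1) * (a.2 + 1)) • (f (a.1 + 1, m.1) * f (a.2 + 1, m.2))
    + ∑ m ∈ antidiagonal j, ∑ a ∈ antidiagonal i,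
      ((m.1 + 1) * (m.2 + 1)) • (f (a.1, m.1 + 1) * f (a.2, m.2 + 1))

theorem gradSqCoeff_zero_zero (f : ℕ × ℕ → A) :
    gradSqCoeff f 0 0 = f (1, 0) ^ 2 + f (0, 1) ^ 2 := by
  simp [gradSqCoeff, sq]

theorem gradSqCoeff_eq_sum_range (f : ℕ × ℕ → A) (i j : ℕ) :
    gradSqCoeff f i j =
      ∑ k ∈ range (i + 1), ∑ l ∈ range (j + 1),
          (((i - k + 1) * (k + 1) : ℕ) : A) * f (i - k + 1, j - l) * f (k + 1, l)
        + ∑ k ∈ range (j + 1), ∑ l ∈ range (i + 1),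
          (((j - k + 1) * (k + 1) : ℕ) : A) * f (i - l, j - k + 1) * f (l, k + 1) := by
  simp only [gradSqCoeff, Nat.sum_antidiagonal_eq_sum_range_succ_mk, nsmul_eq_mul,
    mul_comm, mul_left_comm]

theorem gradSqCoeff_congr {f g : ℕ × ℕ → A} {i j : ℕ}
    (h : ∀ p : ℕ × ℕ, p.1 ≤ i + 1 → 1 ≤ p.1 + p.2 → p.1 + p.2 ≤ i + j + 1 → f p = g p) :
    gradSqCoeff f i j = gradSqCoeff g i j := by
  unfold gradSqCoeff
  congr 1 <;>
  · refine sum_congr rfl fun a ha => sum_congr rfl fun m hm => ?_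
    rw [HasAntidiagonal.mem_antidiagonal] at ha hm
    rw [h _ (by grind) (by grind) (by grind), h _ (by grind) (by grind) (by grind)]

theorem map_gradSqCoeff {F : Type*} [FunLike F A B] [RingHomClass F A B] (φ : F)
    (f : ℕ × ℕ → A) (i j : ℕ) :
    φ (gradSqCoeff f i j) = gradSqCoeff (fun p => φ (f p)) i j := by
  simp only [gradSqCoeff, map_add, map_sum, map_nsmul, map_mul]

end GradSqCoeff

/-- The weight of the coefficient `(i, j)` of a normalized GPW solution, which bounds its degree as
a polynomial in the two coefficients of order one. -/
def gpwWeight (p : ℕ × ℕ) : ℤ :=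
  if p.1 + p.2 = 1 then 1 else p.1 - 2

theorem gpwWeight_succ_left_add_le {a a' m m' : ℕ} (h : (a + a', m + m') ≠ (0, 0)) :
    gpwWeight (a + 1, m) + gpwWeight (a' + 1, m') ≤ a + a' := by
  grind [gpwWeight]

theorem gpwWeight_succ_right_add_le {a a' m m' : ℕ} (h : (a + a', m + m') ≠ (0, 0)) :
    gpwWeight (a, m + 1) + gpwWeight (a', m' + 1) ≤ a + a' := by
  grind [gpwWeight]

section DegreeFiltration

variable {σ R : Type*} [CommSemiring R] {d e : ℤ} {P Q : MvPolynomial σ R}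

variable (σ R) in
/-- The polynomials of total degree at most `d`. The bound is an integer so that the zero
polynomial is the only one of negative degree, which `MvPolynomial.totalDegree` cannot express. -/
def degreeFiltration (d : ℤ) : Submodule R (MvPolynomial σ R) :=
  restrictSupport R {m | (m.degree : ℤ) ≤ d}

theorem degreeFiltration_mono : Monotone (degreeFiltration σ R) :=
  fun _ _ hde => restrictSupport_mono R fun _ hm => le_trans hm hde

theorem mul_mem_degreeFiltration (hP : P ∈ degreeFiltration σ R d)
    (hQ : Q ∈ degreeFiltration σ R e) : P * Q ∈ degreeFiltration σ R (d + e) := by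
  have hPQ := Submodule.mul_mem_mul hP hQ
  rw [degreeFiltration, degreeFiltration, ← restrictSupport_add] at hPQ
  refine restrictSupport_mono R ?_ hPQ
  rintro _ ⟨m, hm, n, hn, rfl⟩
  simpa using add_le_add hm hn

theorem C_mem_degreeFiltration (hd : 0 ≤ d) (r : R) : C r ∈ degreeFiltration σ R d :=
  (monomial_mem_restrictSupport R).2 <| .inl <| by simpa using hd

theorem X_mem_degreeFiltration (s : σ) : X s ∈ degreeFiltration σ R 1 :=
  (monomial_mem_restrictSupport R).2 <| .inl <| by simp

theorem totalDegree_le_of_mem_degreeFiltration {n : ℕ} (hP : P ∈ degreeFiltration σ R n) :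
    P.totalDegree ≤ n :=
  (mem_restrictTotalDegree σ n P).1 <| restrictSupport_mono R (fun _ hm => Int.ofNat_le.1 hm) hP

theorem gradSqCoeff_mem_degreeFiltration {f : ℕ × ℕ → MvPolynomial σ R} {i j : ℕ}
    (hij : (i, j) ≠ (0, 0))
    (hf : ∀ p : ℕ × ℕ, p.1 ≤ i + 1 → f p ∈ degreeFiltration σ R (gpwWeight p)) :
    gradSqCoeff f i j ∈ degreeFiltration σ R i := by
  have hmul {p r : ℕ × ℕ} (hp : p.1 ≤ i + 1) (hr : r.1 ≤ i + 1)
      (hpr : gpwWeight p + gpwWeight r ≤ i) : f p * f r ∈ degreeFiltration σ R i :=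
    degreeFiltration_mono hpr <| mul_mem_degreeFiltration (hf p hp) (hf r hr)
  refine add_mem (sum_mem fun a ha => sum_mem fun m hm => nsmul_mem ?_ _)
    (sum_mem fun m hm => sum_mem fun a ha => nsmul_mem ?_ _) <;>
  obtain ⟨rfl, rfl⟩ :=
    And.intro (HasAntidiagonal.mem_antidiagonal.1 ha) (HasAntidiagonal.mem_antidiagonal.1 hm)
  · exact hmul (by simp) (by simp) (by exact_mod_cast gpwWeight_succ_left_add_le hij)
  · exact hmul (by grind) (by grind) (by exact_mod_cast gpwWeight_succ_right_add_le hij)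

end DegreeFiltration

section GPWPolynomials

variable {K A : Type*} [Field K] [CommRing A] [Algebra K A] {q : ℕ} {b : ℕ × ℕ → K} {c : K}

/-- The polynomials obtained by solving the GPW system column by column, with `X 0` and `X 1` in
place of the coefficients of order one and with `c` in place of `X 0 ^ 2 + X 1 ^ 2` in the equation
for `(i, j) = (0, 0)`. The test `p.1 < i + 2` only serves to make the recursion well founded. -/
def gpwPoly (b : ℕ × ℕ → K) (c : K) : ℕ × ℕ → MvPolynomial (Fin 2) K
  | (0, 1) => X 1
  | (1, 0) => X 0
  | (i + 2, j) =>
    (((i + 2) * (i + 1) : ℕ) : K)⁻¹ •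
      (C (b (i, j)) - ((j + 2) * (j + 1)) • gpwPoly b c (i, j + 2)
        - if (i, j) = (0, 0) then C c
          else gradSqCoeff (fun p => if p.1 < i + 2 then gpwPoly b c p else 0) i j)
  | _ => 0
termination_by p => p.1

theorem gpwPoly_add_two (b : ℕ × ℕ → K) (c : K) (i j : ℕ) :
    gpwPoly b c (i + 2, j) =
      (((i + 2) * (i + 1) : ℕ) : K)⁻¹ •
        (C (b (i, j)) - ((j + 2) * (j + 1)) • gpwPoly b c (i, j + 2)
          - if (i, j) = (0, 0) then C c else gradSqCoeff (gpwPoly b c) i j) := by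
  rw [gpwPoly, gradSqCoeff_congr fun p hp _ _ => if_pos (by omega)]

theorem gpwPoly_eq_zero {i j : ℕ} (hi : i ≤ 1) (hij : i + j ≠ 1) : gpwPoly b c (i, j) = 0 := by
  rw [gpwPoly] <;> grind

theorem gpwPoly_mem_degreeFiltration (b : ℕ × ℕ → K) (c : K) :
    ∀ p : ℕ × ℕ, gpwPoly b c p ∈ degreeFiltration (Fin 2) K (gpwWeight p)
  | (0, 1) => by simpa [gpwPoly, gpwWeight] using X_mem_degreeFiltration 1
  | (1, 0) => by simpa [gpwPoly, gpwWeight] using X_mem_degreeFiltration 0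
  | (i + 2, j) => by
    have ih : ∀ p : ℕ × ℕ, p.1 ≤ i + 1 →
        gpwPoly b c p ∈ degreeFiltration (Fin 2) K (gpwWeight p) :=
      fun p _ => gpwPoly_mem_degreeFiltration b c p
    have hweight : gpwWeight (i + 2, j) = i := by grind [gpwWeight]
    have hcol : gpwPoly b c (i, j + 2) ∈ degreeFiltration (Fin 2) K i :=
      degreeFiltration_mono (by grind [gpwWeight]) (ih (i, j + 2) (by simp))
    rw [hweight, gpwPoly_add_two]
    refine Submodule.smul_mem _ _ (sub_mem (sub_mem ?_ (nsmul_mem hcol _)) ?_)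
    · exact C_mem_degreeFiltration (by positivity) _
    · split_ifs with hij
      · exact C_mem_degreeFiltration (by positivity) c
      · exact gradSqCoeff_mem_degreeFiltration hij ih
  | (0, 0) | (0, j + 2) | (1, j + 1) => by
    rw [gpwPoly_eq_zero (by omega) (by omega)]
    exact zero_mem _
termination_by p => p.1

/-- A family over a `K`-algebra solving the GPW system under the GPW normalization, where the
direction enters only through `c = lam (1, 0) ^ 2 + lam (0, 1) ^ 2`, which is `N ^ 2` for the
direction `N (cos θ, sin θ)`. -/
structure IsGPWSolution (q : ℕ) (b : ℕ × ℕ → K) (c : K) (lam : ℕ × ℕ → A) : Prop where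
  system : ∀ i j : ℕ, i + j + 1 ≤ q →
    algebraMap K A (b (i, j)) =
      ((i + 2) * (i + 1)) • lam (i + 2, j) + ((j + 2) * (j + 1)) • lam (i, j + 2)
        + gradSqCoeff lam i j
  sq_add_sq : lam (1, 0) ^ 2 + lam (0, 1) ^ 2 = algebraMap K A c
  eq_zero : ∀ i j : ℕ, i ≤ 1 → 1 < i + j → i + j ≤ q + 1 → lam (i, j) = 0

theorem IsGPWSolution.of_gpwSystem {b : ℕ × ℕ → ℂ} {N : ℂ} {θ : ℝ} {lam : ℕ × ℕ → ℂ}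
    (hs : gpwSystem q b lam) (hn : gpwNormalized q N θ lam) :
    IsGPWSolution q b (N ^ 2) lam := by
  obtain ⟨-, hx, hy, hzero⟩ := hn
  refine ⟨fun i j hij => ?_, ?_, hzero⟩
  · rw [gradSqCoeff_eq_sum_range, ← add_assoc, nsmul_eq_mul, nsmul_eq_mul]
    exact hs i j hij
  · have hcs : (Real.cos θ : ℂ) ^ 2 + (Real.sin θ : ℂ) ^ 2 = 1 := by
      exact_mod_cast Real.cos_sq_add_sin_sq θ
    rw [hx, hy, mul_pow, mul_pow, ← mul_add, hcs, mul_one, Algebra.algebraMap_self_apply]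

theorem IsGPWSolution.add_two_eq [CharZero K] {lam : ℕ × ℕ → A} (h : IsGPWSolution q b c lam)
    {i j : ℕ} (hij : i + j + 1 ≤ q) :
    lam (i + 2, j) =
      (((i + 2) * (i + 1) : ℕ) : K)⁻¹ •
        (algebraMap K A (b (i, j)) - ((j + 2) * (j + 1)) • lam (i, j + 2)
          - gradSqCoeff lam i j) := by
  have hne : (((i + 2) * (i + 1) : ℕ) : K) ≠ 0 := by
    exact_mod_cast (by positivity : (i + 2) * (i + 1) ≠ 0)
  rw [eq_inv_smul_iff₀ hne, h.system i j hij, Nat.cast_smul_eq_nsmul]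
  abel

theorem IsGPWSolution.aeval_gpwPoly [CharZero K] {lam : ℕ × ℕ → A}
    (h : IsGPWSolution q b c lam) :
    ∀ p : ℕ × ℕ, 1 ≤ p.1 + p.2 → p.1 + p.2 ≤ q + 1 →
      aeval ![lam (1, 0), lam (0, 1)] (gpwPoly b c p) = lam p
  | (0, 1), _, _ => by simp [gpwPoly]
  | (1, 0), _, _ => by simp [gpwPoly]
  | (i + 2, j), _, hpq => by
    have ih : ∀ p : ℕ × ℕ, p.1 ≤ i + 1 → 1 ≤ p.1 + p.2 → p.1 + p.2 ≤ i + j + 2 →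
        aeval ![lam (1, 0), lam (0, 1)] (gpwPoly b c p) = lam p :=
      fun p _ hp hle => h.aeval_gpwPoly p hp (by grind)
    have hcol := ih (i, j + 2) (by simp) (by grind) (by grind)
    have hgrad : aeval ![lam (1, 0), lam (0, 1)]
        (if (i, j) = (0, 0) then C c else gradSqCoeff (gpwPoly b c) i j) =
          gradSqCoeff lam i j := by
      split_ifs with hij
      · obtain ⟨rfl, rfl⟩ := Prod.mk.inj hij
        rw [gradSqCoeff_zero_zero, h.sq_add_sq, aeval_C]
      · rw [map_gradSqCoeff]
        exact gradSqCoeff_congr fun p hp hpos hle => ih p hp hpos (by omega)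
    rw [gpwPoly_add_two, h.add_two_eq (by grind), map_smul, map_sub, map_sub, map_nsmul, aeval_C,
      hcol, hgrad]
  | (0, 0), hp, _ => by simp at hp
  | (0, j + 2), _, hpq | (1, j + 1), _, hpq => by
    rw [gpwPoly_eq_zero (by omega) (by omega), map_zero,
      h.eq_zero _ _ (by omega) (by grind) (by grind)]
termination_by p => p.1

end GPWPolynomials

theorem gpw_coeffs_are_polynomials_general {K : Type*} [Field K] [CharZero K]
    (b : ℕ × ℕ → K) (c : K) :
    ∃ R : ℕ × ℕ → MvPolynomial (Fin 2) K,
      (∀ i j : ℕ, 2 ≤ i → (R (i, j)).totalDegree ≤ i - 2) ∧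
      ∀ {A : Type*} [CommRing A] [Algebra K A] {q : ℕ} {lam : ℕ × ℕ → A},
        IsGPWSolution q b c lam →
        ∀ i j : ℕ, 2 ≤ i → i + j ≤ q + 1 →
          lam (i, j) = aeval ![lam (1, 0), lam (0, 1)] (R (i, j)) := by
  refine ⟨gpwPoly b c, fun i j hi => totalDegree_le_of_mem_degreeFiltration ?_,
    fun h i j hi hij => (h.aeval_gpwPoly (i, j) (by grind) hij).symm⟩
  exact degreeFiltration_mono (by grind [gpwWeight]) (gpwPoly_mem_degreeFiltration b c (i, j))

/-- There is a family of bivariate polynomials `R (i,j)`, `2 ≤ i`, `i + j ≤ q + 1`, depending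
only on `N`, `q` and `b` (not on `θ`), of total degree at most `i - 2`, such that for every
direction `θ` the solution of the GPW system under the GPW normalization satisfies
`lam (i,j) = R (i,j) (N cos θ, N sin θ)`. -/
theorem gpw_coeffs_are_polynomials (q : ℕ) (hq : 1 ≤ q) (b : ℕ × ℕ → ℂ) (N : ℂ) (hN : N ≠ 0) :
    ∃ R : ℕ × ℕ → MvPolynomial (Fin 2) ℂ,
      (∀ i j : ℕ, 2 ≤ i → i + j ≤ q + 1 → (R (i, j)).totalDegree ≤ i - 2) ∧
      ∀ (θ : ℝ) (lam : ℕ × ℕ → ℂ),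
        gpwSystem q b lam → gpwNormalized q N θ lam →
        ∀ i j : ℕ, 2 ≤ i → i + j ≤ q + 1 →
          lam (i, j) =
            MvPolynomial.eval ![N * Real.cos θ, N * Real.sin θ] (R (i, j)) := by
  obtain ⟨R, hdeg, hR⟩ := gpw_coeffs_are_polynomials_general b (N ^ 2)
  refine ⟨R, fun i j hi _ => hdeg i j hi, fun θ lam hs hn i j hi hij => ?_⟩
  simpa [hn.2.1, hn.2.2.1] using hR (.of_gpwSystem hs hn) i j hi hij
end
end

section
/- Let n ≥ 1 be an integer and κ ∈ ℂ with κ ≠ 0. For l ∈ {1, …, 2n+1} set θ_l = 2π(l−1)/(2n+1). Define the complex matrix M_n^C of size ((n+1)(n+2)/2) × (2n+1) whose rows are indexed by pairs (k₁,k₂) ∈ ℕ² with k₁ + k₂ ≤ n (the row of (k₁,k₂) being number (k₁+k₂)(k₁+k₂+1)/2 + k₂ + 1) and whose entries are (M_n^C)_{(k₁,k₂), l} = (Iκ)^{k₁+k₂} (cos θ_l)^{k₁} (sin θ_l)^{k₂} / (k₁! k₂!), where I = √(−1). Then the rank of M_n^C equals 2n+1. -/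
noncomputable section

/-- Row index type: pairs `(k₁, k₂)` of nonnegative integers with `k₁ + k₂ ≤ n`.
There are `(n+1)(n+2)/2` such pairs. -/
def RowIdx (n : ℕ) := { p : Fin (n + 1) × Fin (n + 1) // (p.1 : ℕ) + (p.2 : ℕ) ≤ n }

instance (n : ℕ) : Fintype (RowIdx n) := by unfold RowIdx; infer_instance

instance (n : ℕ) : DecidableEq (RowIdx n) := by unfold RowIdx; infer_instance

/-- The matrix `M_n^C` whose `l`-th column contains the normalized Taylor coefficients at `G`
of the plane wave `e_l(x,y) = exp(Iκ((x-x_G)cos θ_l + (y-y_G)sin θ_l))` with equi-spaced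
directions `θ_l = 2π(l-1)/(2n+1)`:
`(M_n^C)_{(k₁,k₂),l} = (Iκ)^{k₁+k₂} (cos θ_l)^{k₁} (sin θ_l)^{k₂} / (k₁! k₂!)`. -/
def MnC (n : ℕ) (κ : ℂ) : Matrix (RowIdx n) (Fin (2 * n + 1)) ℂ :=
  Matrix.of fun r l =>
    (Complex.I * κ) ^ ((r.1.1 : ℕ) + (r.1.2 : ℕ)) *
      ((Real.cos (2 * Real.pi * (l : ℕ) / (2 * n + 1)) : ℝ) : ℂ) ^ (r.1.1 : ℕ) *
      ((Real.sin (2 * Real.pi * (l : ℕ) / (2 * n + 1)) : ℝ) : ℂ) ^ (r.1.2 : ℕ) /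
      ((((r.1.1 : ℕ).factorial * (r.1.2 : ℕ).factorial : ℕ)) : ℂ)

/-!
On the unit circle `(x + iy)(x - iy) = 1`, so with `z = x + iy` the polynomials of total degree at
most `n` include the Laurent monomials `z ^ k`, `|k| ≤ n`, and distinct points have distinct `z`.
A linear relation between the columns of the matrix is therefore a relation
`∑ l, v l * z l ^ k = 0` for `2n + 1` consecutive exponents `k`, and after absorbing `z l ^ (-n)`
into `v l` the Vandermonde determinant forces `v = 0`.
-/

section Moments

variable {R ι : Type*} [CommSemiring R]

/-- The values at the points `d l` of the monomials `x ^ k₁ * y ^ k₂` of total degree at most `n`: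
one row per monomial, one column per point. -/
def monomialEvalMatrix (n : ℕ) (d : ι → R × R) : Matrix (RowIdx n) ι R :=
  Matrix.of fun r l => (d l).1 ^ (r.1.1 : ℕ) * (d l).2 ^ (r.1.2 : ℕ)

theorem sum_mul_monomial_eq_zero_of_mulVec_eq_zero [Fintype ι] {n : ℕ} {d : ι → R × R}
    {v : ι → R} (hv : (monomialEvalMatrix n d).mulVec v = 0) {a b : ℕ} (hab : a + b ≤ n) :
    ∑ l, v l * ((d l).1 ^ a * (d l).2 ^ b) = 0 := by
  let r : RowIdx n := ⟨(⟨a, by omega⟩, ⟨b, by omega⟩), hab⟩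
  calc ∑ l, v l * ((d l).1 ^ a * (d l).2 ^ b)
      = (monomialEvalMatrix n d).mulVec v r := Finset.sum_congr rfl fun l _ => mul_comm _ _
    _ = 0 := congrFun hv r

theorem sum_mul_linearForm_pow_eq_zero [Fintype ι] {d : ι → R × R} {v : ι → R} {k : ℕ}
    (moments : ∀ a b : ℕ, a + b = k → ∑ l, v l * ((d l).1 ^ a * (d l).2 ^ b) = 0) (α β : R) :
    ∑ l, v l * (α * (d l).1 + β * (d l).2) ^ k = 0 := by
  simp_rw [add_pow, Finset.mul_sum]
  rw [Finset.sum_comm]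
  refine Finset.sum_eq_zero fun a ha => ?_
  have a_add : a + (k - a) = k := Nat.add_sub_of_le (Finset.mem_range_succ_iff.mp ha)
  calc ∑ l, v l * ((α * (d l).1) ^ a * (β * (d l).2) ^ (k - a) * k.choose a)
      = α ^ a * β ^ (k - a) * k.choose a * ∑ l, v l * ((d l).1 ^ a * (d l).2 ^ (k - a)) := by
        rw [Finset.mul_sum]
        exact Finset.sum_congr rfl fun l _ => by ring
    _ = 0 := by rw [moments a (k - a) a_add, mul_zero]

end Moments

theorem rank_eq_card_of_forall_mulVec_eq_zero {R m n : Type*} [CommRing R] [Nontrivial R]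
    [Fintype n] {A : Matrix m n R} (hA : ∀ v, A.mulVec v = 0 → v = 0) :
    A.rank = Fintype.card n := by
  rw [Matrix.rank, LinearMap.finrank_range_of_inj
    (LinearMap.ker_eq_bot.mp (Matrix.ker_mulVecLin_eq_bot_iff.mpr hA)),
    Module.finrank_fintype_fun_eq_card]

theorem add_mul_mul_sub_mul_eq_one_of_sq_add_sq_eq_one {R : Type*} [CommRing R] {i x y : R}
    (hi : i ^ 2 = -1) (hxy : x ^ 2 + y ^ 2 = 1) : (x + i * y) * (x - i * y) = 1 := by
  linear_combination hxy - y ^ 2 * hi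

section Field

variable {K ι : Type*} [Field K]

theorem eq_zero_of_forall_sum_mul_zpow_add_eq_zero [Fintype ι] {z v : ι → K}
    (hz : ∀ l, z l ≠ 0) (z_inj : Function.Injective z) (a : ℤ)
    (hv : ∀ i < Fintype.card ι, ∑ l, v l * z l ^ (a + i) = 0) : v = 0 := by
  let e : Fin (Fintype.card ι) ≃ ι := (Fintype.equivFin ι).symm
  have shifted : (fun j => v (e j) * z (e j) ^ a) = 0 := by
    refine Matrix.eq_zero_of_forall_pow_sum_mul_pow_eq_zero (z_inj.comp e.injective) fun i => ?_
    calc ∑ j, v (e j) * z (e j) ^ a * z (e j) ^ (i : ℕ)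
        = ∑ l, v l * z l ^ a * z l ^ (i : ℕ) := e.sum_comp fun l => v l * z l ^ a * z l ^ (i : ℕ)
      _ = ∑ l, v l * z l ^ (a + (i : ℕ)) := Finset.sum_congr rfl fun l _ => by
        rw [zpow_add₀ (hz l), zpow_natCast, mul_assoc]
      _ = 0 := hv i i.2
  refine funext (e.forall_congr_right.mp fun j => ?_)
  exact (mul_eq_zero.mp (congrFun shifted j)).resolve_right (zpow_ne_zero _ (hz _))

theorem inv_add_mul_of_sq_add_sq_eq_one {i x y : K} (hi : i ^ 2 = -1) (hxy : x ^ 2 + y ^ 2 = 1) :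
    (x + i * y)⁻¹ = x - i * y :=
  inv_eq_of_mul_eq_one_right (add_mul_mul_sub_mul_eq_one_of_sq_add_sq_eq_one hi hxy)

theorem eq_of_add_mul_eq_of_sq_add_sq_eq_one [NeZero (2 : K)] {i : K} (hi : i ^ 2 = -1)
    {p q : K × K} (hp : p.1 ^ 2 + p.2 ^ 2 = 1) (hq : q.1 ^ 2 + q.2 ^ 2 = 1)
    (hpq : p.1 + i * p.2 = q.1 + i * q.2) : p = q := by
  have hpq_conj : p.1 - i * p.2 = q.1 - i * q.2 := by
    rw [← inv_add_mul_of_sq_add_sq_eq_one hi hp, hpq, inv_add_mul_of_sq_add_sq_eq_one hi hq]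
  have fst_eq : p.1 = q.1 :=
    mul_left_cancel₀ (two_ne_zero (α := K)) (by linear_combination hpq + hpq_conj)
  have snd_eq : p.2 = q.2 :=
    mul_left_cancel₀ (two_ne_zero (α := K))
      (by linear_combination i * hpq_conj - i * hpq + 2 * (p.2 - q.2) * hi)
  exact Prod.ext fst_eq snd_eq

theorem sum_mul_zpow_eq_zero_of_mulVec_eq_zero [Fintype ι] {n : ℕ} {i : K} (hi : i ^ 2 = -1)
    {d : ι → K × K} (hd : ∀ l, (d l).1 ^ 2 + (d l).2 ^ 2 = 1) {v : ι → K}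
    (hv : (monomialEvalMatrix n d).mulVec v = 0) {k : ℤ} (hk : k.natAbs ≤ n) :
    ∑ l, v l * ((d l).1 + i * (d l).2) ^ k = 0 := by
  have linearForm_pow (t : K) : ∑ l, v l * ((d l).1 + t * (d l).2) ^ k.natAbs = 0 := by
    simpa only [one_mul] using sum_mul_linearForm_pow_eq_zero (fun a b hab =>
      sum_mul_monomial_eq_zero_of_mulVec_eq_zero hv (hab.trans_le hk)) 1 t
  rcases k.natAbs_eq with k_eq | k_eq
  · rw [k_eq]
    simpa only [zpow_natCast] using linearForm_pow i
  · rw [k_eq]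
    simpa only [zpow_neg, zpow_natCast, ← inv_pow, inv_add_mul_of_sq_add_sq_eq_one hi (hd _),
      neg_mul, ← sub_eq_add_neg] using linearForm_pow (-i)

theorem rank_monomialEvalMatrix_of_sq_add_sq_eq_one [Fintype ι] [NeZero (2 : K)] {n : ℕ} {i : K}
    (hi : i ^ 2 = -1) (hι : Fintype.card ι ≤ 2 * n + 1) {d : ι → K × K}
    (hd : ∀ l, (d l).1 ^ 2 + (d l).2 ^ 2 = 1) (d_inj : Function.Injective d) :
    (monomialEvalMatrix n d).rank = Fintype.card ι := by
  refine rank_eq_card_of_forall_mulVec_eq_zero fun v hv => ?_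
  have z_ne_zero (l : ι) : (d l).1 + i * (d l).2 ≠ 0 :=
    left_ne_zero_of_mul_eq_one (add_mul_mul_sub_mul_eq_one_of_sq_add_sq_eq_one hi (hd l))
  have z_inj : Function.Injective fun l => (d l).1 + i * (d l).2 := fun l l' hl =>
    d_inj (eq_of_add_mul_eq_of_sq_add_sq_eq_one hi (hd l) (hd l') hl)
  exact eq_zero_of_forall_sum_mul_zpow_add_eq_zero z_ne_zero z_inj (-n) fun j hj =>
    sum_mul_zpow_eq_zero_of_mulVec_eq_zero hi hd hv (by omega)

end Field

section PlaneWave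

variable {ι : Type*}

/-- The matrix of Taylor coefficients of order at most `n` at `G` of the plane waves
`exp (Iκ ((x - x_G) * (d l).1 + (y - y_G) * (d l).2))`, for arbitrary directions `d l`; complex
directions give evanescent waves. -/
def planeWaveTaylorMatrix (n : ℕ) (κ : ℂ) (d : ι → ℂ × ℂ) : Matrix (RowIdx n) ι ℂ :=
  Matrix.of fun r l =>
    (Complex.I * κ) ^ ((r.1.1 : ℕ) + (r.1.2 : ℕ)) * (d l).1 ^ (r.1.1 : ℕ) *
      (d l).2 ^ (r.1.2 : ℕ) / (((r.1.1 : ℕ).factorial * (r.1.2 : ℕ).factorial : ℕ) : ℂ)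

theorem planeWaveTaylorMatrix_eq_diagonal_mul (n : ℕ) (κ : ℂ) (d : ι → ℂ × ℂ) :
    planeWaveTaylorMatrix n κ d =
      Matrix.diagonal (fun r : RowIdx n => (Complex.I * κ) ^ ((r.1.1 : ℕ) + (r.1.2 : ℕ)) /
        (((r.1.1 : ℕ).factorial * (r.1.2 : ℕ).factorial : ℕ) : ℂ)) * monomialEvalMatrix n d := by
  ext r l
  rw [Matrix.diagonal_mul, planeWaveTaylorMatrix, monomialEvalMatrix, Matrix.of_apply,
    Matrix.of_apply]
  ring

theorem rank_planeWaveTaylorMatrix [Fintype ι] (n : ℕ) {κ : ℂ} (hκ : κ ≠ 0)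
    (d : ι → ℂ × ℂ) : (planeWaveTaylorMatrix n κ d).rank = (monomialEvalMatrix n d).rank := by
  rw [planeWaveTaylorMatrix_eq_diagonal_mul]
  refine Matrix.rank_mul_eq_right_of_isUnit_det _ _ ?_
  rw [Matrix.det_diagonal, isUnit_iff_ne_zero, Finset.prod_ne_zero_iff]
  intro r _
  have coeff_ne_zero : (Complex.I * κ) ^ ((r.1.1 : ℕ) + (r.1.2 : ℕ)) ≠ 0 :=
    pow_ne_zero _ (mul_ne_zero Complex.I_ne_zero hκ)
  exact div_ne_zero coeff_ne_zero (Nat.cast_ne_zero.mpr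
    (Nat.mul_ne_zero (Nat.factorial_ne_zero _) (Nat.factorial_ne_zero _)))

/-- The `N` equally spaced unit vectors `(cos θ_l, sin θ_l)`, `θ_l = 2πl/N`; `l` counts from `0`. -/
def equispacedDirection (N : ℕ) (l : Fin N) : ℂ × ℂ :=
  (Complex.cos (2 * Real.pi * (l : ℕ) / N), Complex.sin (2 * Real.pi * (l : ℕ) / N))

theorem sq_add_sq_equispacedDirection (N : ℕ) (l : Fin N) :
    (equispacedDirection N l).1 ^ 2 + (equispacedDirection N l).2 ^ 2 = 1 :=
  Complex.cos_sq_add_sin_sq _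

theorem equispacedDirection_injective (N : ℕ) : Function.Injective (equispacedDirection N) := by
  intro l l' hl
  have root_pow (j : Fin N) :
      (equispacedDirection N j).1 + (equispacedDirection N j).2 * Complex.I =
        Complex.exp (2 * Real.pi * Complex.I / N) ^ (j : ℕ) := by
    rw [equispacedDirection, ← Complex.exp_mul_I, ← Complex.exp_nat_mul]
    ring_nf
  have root : IsPrimitiveRoot (Complex.exp (2 * Real.pi * Complex.I / N)) N :=
    Complex.isPrimitiveRoot_exp N l.pos.ne'
  exact Fin.ext (root.pow_inj l.2 l'.2 (by rw [← root_pow, ← root_pow, hl]))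

theorem MnC_eq_planeWaveTaylorMatrix (n : ℕ) (κ : ℂ) :
    MnC n κ = planeWaveTaylorMatrix n κ (equispacedDirection (2 * n + 1)) := by
  ext r l
  simp [MnC, planeWaveTaylorMatrix, equispacedDirection]

theorem rank_MnC_general [Fintype ι] {n : ℕ} (hι : Fintype.card ι ≤ 2 * n + 1) {κ : ℂ} (hκ : κ ≠ 0)
    {d : ι → ℂ × ℂ} (hd : ∀ l, (d l).1 ^ 2 + (d l).2 ^ 2 = 1) (d_inj : Function.Injective d) :
    (planeWaveTaylorMatrix n κ d).rank = Fintype.card ι := by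
  rw [rank_planeWaveTaylorMatrix n hκ,
    rank_monomialEvalMatrix_of_sq_add_sq_eq_one Complex.I_sq hι hd d_inj]

end PlaneWave

/-- The matrix `M_n^C` of Taylor coefficients of the `2n+1` classical plane waves with
equi-spaced directions and nonzero wave number `κ` has full rank `2n+1`. -/
theorem rank_MnC (n : ℕ) (hn : 1 ≤ n) (κ : ℂ) (hκ : κ ≠ 0) :
    (MnC n κ).rank = 2 * n + 1 := by
  rw [MnC_eq_planeWaveTaylorMatrix, rank_MnC_general (Fintype.card_fin _).le hκ
    (sq_add_sq_equispacedDirection _) (equispacedDirection_injective _), Fintype.card_fin]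
end
end

section
/- Let n ≥ 2 and b : ℕ × ℕ → ℂ. Define K as the set of families C = (C_{k₁,k₂}) ∈ ℂ^{(n+1)(n+2)/2}, indexed by (k₁,k₂) ∈ ℕ² with k₁ + k₂ ≤ n, satisfying for all (k₁,k₂) with k₁ + k₂ ≤ n − 2 the linear relation (k₁+1)(k₁+2) C_{k₁+2,k₂} + (k₂+1)(k₂+2) C_{k₁,k₂+2} = Σ_{i=0}^{k₁} Σ_{j=0}^{k₂} b(i,j) C_{k₁−i, k₂−j}. Then K is a ℂ-linear subspace of ℂ^{(n+1)(n+2)/2} of dimension exactly 2n + 1. -/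
noncomputable section

/-!
Solved for `C (k₁ + 2, k₂)`, each relation expresses a coefficient with first index `k₁ + 2` through
coefficients with smaller first index. Hence the coefficients with first index `0` or `1`, of which
there are `(n + 1) + n`, can be prescribed arbitrarily, and they determine all the others.
-/

section FixedPoint

variable {ι : Type*} {α : ι → Type*} {r : ι → ι → Prop}

open Classical in
theorem exists_isFixedPt_of_dependsOn [∀ i, Nonempty (α i)] (hr : WellFounded r)
    {F : (∀ i, α i) → ∀ i, α i} (hF : ∀ i, DependsOn (F · i) {j | r j i}) :
    ∃ x, Function.IsFixedPt F x := by
  let step (i : ι) (x : ∀ j, r j i → α j) : α i :=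
    F (fun j => if h : r j i then x j h else Classical.arbitrary (α j)) i
  refine ⟨hr.fix step, funext fun i => ?_⟩
  rw [hr.fix_eq]
  exact hF i fun j (hj : r j i) => by rw [dif_pos hj]

theorem eq_of_isFixedPt_of_dependsOn (hr : WellFounded r)
    {F : (∀ i, α i) → ∀ i, α i} (hF : ∀ i, DependsOn (F · i) {j | r j i})
    {x y : ∀ i, α i} (hx : Function.IsFixedPt F x) (hy : Function.IsFixedPt F y) : x = y := by
  funext i
  induction i using hr.induction with
  | _ i ih =>
    calc x i = F x i := (congrFun hx i).symm
      _ = F y i := hF i ih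
      _ = y i := congrFun hy i

end FixedPoint

section RecursionSpace

variable {ι R M : Type*} [Semiring R] [AddCommMonoid M] [Module R M]

/-- The families `C` satisfying the linear recursion `C i = T C i` at every index `i` outside the
set `S` of initial positions. -/
def recursionSpace (T : (ι → M) →ₗ[R] (ι → M)) (S : Set ι) : Submodule R (ι → M) :=
  ⨅ i ∈ Sᶜ, LinearMap.eqLocus (LinearMap.proj i) (LinearMap.proj i ∘ₗ T)

theorem mem_recursionSpace {T : (ι → M) →ₗ[R] (ι → M)} {S : Set ι} {C : ι → M} :
    C ∈ recursionSpace T S ↔ ∀ i ∉ S, C i = T C i := by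
  simp [recursionSpace]

open Classical in
theorem bijective_restrict_recursionSpace {r : ι → ι → Prop} (hr : WellFounded r)
    {T : (ι → M) →ₗ[R] (ι → M)} (hT : ∀ i, DependsOn (T · i) {j | r j i}) (S : Set ι) :
    Function.Bijective
      ((LinearMap.funLeft R M ((↑) : S → ι)).domRestrict (recursionSpace T S)) := by
  let F (g : S → M) (C : ι → M) (i : ι) : M := if h : i ∈ S then g ⟨i, h⟩ else T C i
  have hF (g : S → M) (i : ι) : DependsOn (F g · i) {j | r j i} := by
    intro C D h
    by_cases hi : i ∈ S
    · simp only [F, dif_pos hi]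
    · simpa only [F, dif_neg hi] using hT i h
  have isFixedPt_iff (g : S → M) (C : ι → M) :
      Function.IsFixedPt (F g) C ↔ C ∈ recursionSpace T S ∧ ∀ i : S, C i = g i := by
    rw [mem_recursionSpace, Function.IsFixedPt, funext_iff]
    constructor
    · exact fun h => ⟨fun i hi => (h i).symm.trans (dif_neg hi),
        fun i => (h i).symm.trans (dif_pos i.2)⟩
    · rintro ⟨recursion, initial⟩ i
      by_cases hi : i ∈ S
      · exact (dif_pos hi).trans (initial ⟨i, hi⟩).symm
      · exact (dif_neg hi).trans (recursion i hi).symm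
  refine ⟨fun C D h => Subtype.ext ?_, fun g => ?_⟩
  · exact eq_of_isFixedPt_of_dependsOn hr (hF fun i => D.1 i)
      ((isFixedPt_iff _ _).2 ⟨C.2, congrFun h⟩) ((isFixedPt_iff _ _).2 ⟨D.2, fun _ => rfl⟩)
  · obtain ⟨C, hC⟩ := exists_isFixedPt_of_dependsOn hr (hF g)
    obtain ⟨mem_C, initial⟩ := (isFixedPt_iff g C).1 hC
    exact ⟨⟨C, mem_C⟩, funext initial⟩

/-- A solution of a well-founded linear recursion amounts to its values at the initial positions. -/
def recursionSpaceEquiv {r : ι → ι → Prop} (hr : WellFounded r)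
    {T : (ι → M) →ₗ[R] (ι → M)} (hT : ∀ i, DependsOn (T · i) {j | r j i}) (S : Set ι) :
    recursionSpace T S ≃ₗ[R] (S → M) :=
  LinearEquiv.ofBijective _ (bijective_restrict_recursionSpace hr hT S)

end RecursionSpace

section TaylorRecursion

variable {R : Type*} [CommRing R]

/-- The Taylor coefficients of the product of two functions of two variables, as a linear function
of those of the second factor. -/
def taylorMul (b : ℕ × ℕ → R) : (ℕ × ℕ → R) →ₗ[R] (ℕ × ℕ → R) :=
  LinearMap.pi fun k => ∑ i ∈ Finset.range (k.1 + 1), ∑ j ∈ Finset.range (k.2 + 1),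
    b (i, j) • LinearMap.proj (k.1 - i, k.2 - j)

theorem taylorMul_apply (b C : ℕ × ℕ → R) (k : ℕ × ℕ) :
    taylorMul b C k = ∑ i ∈ Finset.range (k.1 + 1), ∑ j ∈ Finset.range (k.2 + 1),
      b (i, j) * C (k.1 - i, k.2 - j) := by
  simp [taylorMul]

theorem dependsOn_taylorMul (b : ℕ × ℕ → R) (k : ℕ × ℕ) :
    DependsOn (taylorMul b · k) (Set.Iic k) := by
  intro C D h
  simp only [taylorMul_apply]
  refine Finset.sum_congr rfl fun i _ => Finset.sum_congr rfl fun j _ => ?_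
  rw [h (k.1 - i, k.2 - j) ⟨Nat.sub_le _ _, Nat.sub_le _ _⟩]

variable [Algebra ℚ R]

/-- The equation `Δu = βu` on Taylor coefficients of order at most `n`, solved for the coefficient
of highest order in the first variable; `b` lists the Taylor coefficients of `β`. The value `0`
beyond order `n` encodes the truncation; at first index `0` or `1`, where there is no equation, it
is arbitrary up to order `n`. -/
def taylorRecursion (n : ℕ) (b : ℕ × ℕ → R) : (ℕ × ℕ → R) →ₗ[R] (ℕ × ℕ → R) :=
  LinearMap.pi fun
    | (k₁ + 2, k₂) =>
      if k₁ + k₂ + 2 ≤ n then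
        (((k₁ + 1) * (k₁ + 2) : ℕ) : ℚ)⁻¹ • (LinearMap.proj (k₁, k₂) ∘ₗ taylorMul b
          - (((k₂ + 1) * (k₂ + 2) : ℕ) : R) • LinearMap.proj (k₁, k₂ + 2))
      else 0
    | _ => 0

theorem taylorRecursion_of_lt {n : ℕ} {k : ℕ × ℕ} (hk : n < k.1 + k.2) (b C : ℕ × ℕ → R) :
    taylorRecursion n b C k = 0 := by
  obtain ⟨_ | _ | k₁, k₂⟩ := k
  · rfl
  · rfl
  · have : ¬ k₁ + k₂ + 2 ≤ n := by dsimp only at hk; omega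
    simp [taylorRecursion, this]

theorem taylorRecursion_add_two {n k₁ k₂ : ℕ} (hk : k₁ + k₂ + 2 ≤ n) (b C : ℕ × ℕ → R) :
    taylorRecursion n b C (k₁ + 2, k₂) = (((k₁ + 1) * (k₁ + 2) : ℕ) : ℚ)⁻¹ •
      (taylorMul b C (k₁, k₂) - (((k₂ + 1) * (k₂ + 2) : ℕ) : R) * C (k₁, k₂ + 2)) := by
  simp [taylorRecursion, hk]

theorem eq_taylorRecursion_add_two_iff {n k₁ k₂ : ℕ} (hk : k₁ + k₂ + 2 ≤ n) {b C : ℕ × ℕ → R} :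
    C (k₁ + 2, k₂) = taylorRecursion n b C (k₁ + 2, k₂) ↔
      (((k₁ + 1) * (k₁ + 2) : ℕ) : R) * C (k₁ + 2, k₂)
        + (((k₂ + 1) * (k₂ + 2) : ℕ) : R) * C (k₁, k₂ + 2) = taylorMul b C (k₁, k₂) := by
  have leadingCoeff_ne_zero : (((k₁ + 1) * (k₁ + 2) : ℕ) : ℚ) ≠ 0 := by positivity
  rw [taylorRecursion_add_two hk, eq_inv_smul_iff₀ leadingCoeff_ne_zero, Nat.cast_smul_eq_nsmul,
    nsmul_eq_mul, eq_sub_iff_add_eq]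

theorem dependsOn_taylorRecursion (n : ℕ) (b : ℕ × ℕ → R) (k : ℕ × ℕ) :
    DependsOn (taylorRecursion n b · k) {l | l.1 < k.1} := by
  intro C D h
  obtain hk | hk := lt_or_ge n (k.1 + k.2)
  · simp only [taylorRecursion_of_lt hk]
  obtain ⟨_ | _ | k₁, k₂⟩ := k
  · rfl
  · rfl
  · have hk' : k₁ + k₂ + 2 ≤ n := by dsimp only at hk; omega
    have taylorMul_eq : taylorMul b C (k₁, k₂) = taylorMul b D (k₁, k₂) :=
      dependsOn_taylorMul b (k₁, k₂) fun l hl => h l (Nat.lt_add_right 1 (Nat.lt_succ_of_le hl.1))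
    have eq_of_row : C (k₁, k₂ + 2) = D (k₁, k₂ + 2) := h _ (Nat.lt_add_of_pos_right two_pos)
    simp only [taylorRecursion_add_two hk', taylorMul_eq, eq_of_row]

/-- The positions of order at most `n` in the first two rows, where the Taylor coefficients of a
solution are free. -/
def initialPositions (n : ℕ) : Finset (ℕ × ℕ) :=
  {0} ×ˢ Finset.range (n + 1) ∪ {1} ×ˢ Finset.range n

theorem mem_initialPositions {n : ℕ} {k : ℕ × ℕ} :
    k ∈ initialPositions n ↔ k.1 < 2 ∧ k.1 + k.2 ≤ n := by
  simp only [initialPositions, Finset.mem_union, Finset.mem_product, Finset.mem_singleton,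
    Finset.mem_range]
  omega

theorem card_initialPositions (n : ℕ) : (initialPositions n).card = 2 * n + 1 := by
  have rows_disjoint : Disjoint (({0} : Finset ℕ) ×ˢ Finset.range (n + 1))
      ({1} ×ˢ Finset.range n) :=
    Finset.disjoint_product.2 (Or.inl (by simp))
  simp only [initialPositions, Finset.card_union_of_disjoint rows_disjoint, Finset.card_product,
    Finset.card_singleton, Finset.card_range]
  omega

theorem mem_recursionSpace_taylorRecursion {n : ℕ} {b C : ℕ × ℕ → R} :
    C ∈ recursionSpace (taylorRecursion n b) (initialPositions n) ↔
      (∀ k₁ k₂ : ℕ, n < k₁ + k₂ → C (k₁, k₂) = 0) ∧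
        ∀ k₁ k₂ : ℕ, k₁ + k₂ + 2 ≤ n →
          (((k₁ + 1) * (k₁ + 2) : ℕ) : R) * C (k₁ + 2, k₂)
            + (((k₂ + 1) * (k₂ + 2) : ℕ) : R) * C (k₁, k₂ + 2) = taylorMul b C (k₁, k₂) := by
  simp only [mem_recursionSpace, Finset.mem_coe, mem_initialPositions]
  constructor
  · refine fun h => ⟨fun k₁ k₂ hk => ?_, fun k₁ k₂ hk => ?_⟩
    · rw [h (k₁, k₂) (by omega), taylorRecursion_of_lt hk]
    · exact (eq_taylorRecursion_add_two_iff hk).1 (h _ (by omega))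
  · rintro ⟨vanishing, relations⟩ ⟨k₁, k₂⟩ hk
    obtain hlt | hle := lt_or_ge n (k₁ + k₂)
    · rw [vanishing k₁ k₂ hlt, taylorRecursion_of_lt hlt]
    · obtain ⟨k₁, rfl⟩ : ∃ m, k₁ = m + 2 := Nat.exists_eq_add_of_le' (by omega)
      have hk' : k₁ + k₂ + 2 ≤ n := by omega
      exact (eq_taylorRecursion_add_two_iff hk').2 (relations k₁ k₂ hk')

end TaylorRecursion

theorem dim_K_eq_general {R : Type*} [CommRing R] [Nontrivial R] [Algebra ℚ R] (n : ℕ)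
    (b : ℕ × ℕ → R) :
    ∃ K : Submodule R ((ℕ × ℕ) → R),
      (∀ C : (ℕ × ℕ) → R,
        C ∈ K ↔
          ((∀ k₁ k₂ : ℕ, n < k₁ + k₂ → C (k₁, k₂) = 0) ∧
            (∀ k₁ k₂ : ℕ, k₁ + k₂ + 2 ≤ n →
              (((k₁ + 1) * (k₁ + 2) : ℕ) : R) * C (k₁ + 2, k₂)
                  + (((k₂ + 1) * (k₂ + 2) : ℕ) : R) * C (k₁, k₂ + 2) =
                ∑ i ∈ Finset.range (k₁ + 1), ∑ j ∈ Finset.range (k₂ + 1),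
                  b (i, j) * C (k₁ - i, k₂ - j)))) ∧
      Module.Free R K ∧ Module.finrank R K = 2 * n + 1 := by
  let e := recursionSpaceEquiv (measure Prod.fst).wf (dependsOn_taylorRecursion n b)
    (initialPositions n)
  refine ⟨recursionSpace (taylorRecursion n b) (initialPositions n), fun C => ?_,
    Module.Free.of_equiv e.symm, ?_⟩
  · simpa only [taylorMul_apply] using mem_recursionSpace_taylorRecursion
  · rw [e.finrank_eq, Module.finrank_fintype_fun_eq_card]
    exact (Fintype.card_coe _).trans (card_initialPositions n)

/-- The set `K` of families `C = (C_{k₁,k₂})_{k₁+k₂ ≤ n}` (encoded as functions `ℕ × ℕ → ℂ`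
vanishing for `k₁ + k₂ > n`) satisfying, for all `k₁ + k₂ ≤ n - 2`, the linear relations
`(k₁+1)(k₁+2) C_{k₁+2,k₂} + (k₂+1)(k₂+2) C_{k₁,k₂+2} = Σ_{i≤k₁} Σ_{j≤k₂} b(i,j) C_{k₁-i,k₂-j}`
is a `ℂ`-linear subspace of dimension exactly `2n + 1`. -/
theorem dim_K_eq (n : ℕ) (hn : 2 ≤ n) (b : ℕ × ℕ → ℂ) :
    ∃ K : Submodule ℂ ((ℕ × ℕ) → ℂ),
      (∀ C : (ℕ × ℕ) → ℂ,
        C ∈ K ↔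
          ((∀ k₁ k₂ : ℕ, n < k₁ + k₂ → C (k₁, k₂) = 0) ∧
            (∀ k₁ k₂ : ℕ, k₁ + k₂ + 2 ≤ n →
              (((k₁ + 1) * (k₁ + 2) : ℕ) : ℂ) * C (k₁ + 2, k₂)
                  + (((k₂ + 1) * (k₂ + 2) : ℕ) : ℂ) * C (k₁, k₂ + 2) =
                ∑ i ∈ Finset.range (k₁ + 1), ∑ j ∈ Finset.range (k₂ + 1),
                  b (i, j) * C (k₁ - i, k₂ - j)))) ∧
      Module.finrank ℂ K = 2 * n + 1 := by
  obtain ⟨K, mem_K, -, finrank_K⟩ := dim_K_eq_general n b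
  exact ⟨K, mem_K, finrank_K⟩
end
end

section
/- Let n ≥ 1, q ≥ n+1, b : ℕ × ℕ → ℂ, N ∈ ℂ with N ≠ 0, G = (x_G,y_G) ∈ ℝ², and p = 2n+1. For l ∈ {1, …, p} set θ_l = 2π(l−1)/p and let φ_l be the generalized plane wave with data (G, N, θ_l, q, b). Then the functions φ_1, …, φ_p are linearly independent in the ℂ-vector space of functions ℝ² → ℂ. -/
noncomputable section

/-- The polynomial `P(x,y) = Σ_{0 ≤ i+j ≤ q+1} lam (i,j) (x-x_G)^i (y-y_G)^j`, so that the
generalized plane wave is `φ = exp P`. -/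
def gpwP (q : ℕ) (G : ℝ × ℝ) (lam : ℕ × ℕ → ℂ) (z : ℝ × ℝ) : ℂ :=
  ∑ i ∈ Finset.range (q + 2), ∑ j ∈ Finset.range (q + 2 - i),
    lam (i, j) * ((z.1 - G.1 : ℝ) : ℂ) ^ i * ((z.2 - G.2 : ℝ) : ℂ) ^ j

/-!
On the vertical line `x = x_G` the normalization kills every term of `P` except the one with
`(i, j) = (0, 1)`, so there `φ_l` is the exponential `t ↦ exp (N sin θ_l t)` with `t = y - y_G`.
Exponentials with distinct rates are linearly independent by Dedekind's independence of characters.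
The rates are distinct because `p` is odd: `sin θ_l = sin θ_m` forces `θ_l = θ_m` or
`θ_l + θ_m = π` modulo `2π`, and the second case reads `2 (l + m) = (2 k + 1) p`, where `l` and `m`
are counted from `0`.
-/

section LinearForms

variable {E : Type*} [AddCommGroup E] [Module ℝ E]

theorem cexp_linearMap_injective :
    Function.Injective fun (a : E →ₗ[ℝ] ℂ) (x : E) ↦ Complex.exp (a x) := by
  intro a c hac
  ext x
  have hasDerivAt_line (a : E →ₗ[ℝ] ℂ) :
      HasDerivAt (fun t : ℝ ↦ Complex.exp (a (t • x))) (a x) 0 := by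
    simpa using ((hasDerivAt_id (0 : ℝ)).smul_const (a x)).cexp
  have eq_on_line : (fun t : ℝ ↦ Complex.exp (a (t • x))) = fun t ↦ Complex.exp (c (t • x)) :=
    funext fun t ↦ congrFun hac (t • x)
  exact (hasDerivAt_line a).unique (eq_on_line ▸ hasDerivAt_line c)

theorem linearIndependent_cexp_linearMap :
    LinearIndependent ℂ fun (a : E →ₗ[ℝ] ℂ) (x : E) ↦ Complex.exp (a x) := by
  let character (a : E →ₗ[ℝ] ℂ) : Multiplicative E →* ℂ :=
    Complex.expMonoidHom.comp (AddMonoidHom.toMultiplicative a.toAddMonoidHom)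
  have character_injective : Function.Injective character := fun a c hac ↦
    cexp_linearMap_injective <| funext fun x ↦ DFunLike.congr_fun hac (Multiplicative.ofAdd x)
  exact (linearIndependent_monoidHom (Multiplicative E) ℂ).comp character character_injective

end LinearForms

theorem linearIndependent_cexp_mul_ofReal :
    LinearIndependent ℂ fun (a : ℂ) (t : ℝ) ↦ Complex.exp (a * t) := by
  have h := linearIndependent_cexp_linearMap.comp (fun a : ℂ ↦ LinearMap.toSpanSingleton ℝ ℂ a)
    fun a c hac ↦ by simpa using DFunLike.congr_fun hac (1 : ℝ)
  simpa [Function.comp_def, mul_comm] using h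

theorem sin_two_pi_mul_div_eq_iff {p : ℕ} (hp : Odd p) {l m : ℤ} :
    Real.sin (2 * Real.pi * l / p) = Real.sin (2 * Real.pi * m / p) ↔ l ≡ m [ZMOD p] := by
  have hp0 : (p : ℝ) ≠ 0 := by exact_mod_cast hp.pos.ne'
  have same_angle (k : ℤ) :
      2 * Real.pi * m / p = 2 * k * Real.pi + 2 * Real.pi * l / p ↔ m - l = p * k := by
    rw [← @Int.cast_inj ℝ]
    push_cast
    field_simp
    constructor <;> intro h <;> linarith
  have supplementary_angle (k : ℤ) :
      2 * Real.pi * m / p ≠ (2 * k + 1) * Real.pi - 2 * Real.pi * l / p := by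
    intro h
    have h_real : 2 * (l + m : ℝ) = (2 * k + 1) * p := by
      field_simp at h
      linarith
    have h_int : 2 * (l + m) = (2 * k + 1) * (p : ℤ) := by exact_mod_cast h_real
    have h_odd : Odd ((2 * k + 1) * (p : ℤ)) := (odd_two_mul_add_one k).mul (by exact_mod_cast hp)
    exact Int.not_even_iff_odd.mpr h_odd (h_int ▸ even_two_mul (l + m))
  simp only [Real.sin_eq_sin_iff, same_angle, supplementary_angle, or_false, Int.modEq_iff_dvd]
  rfl

theorem sin_two_pi_mul_div_injective {p : ℕ} (hp : Odd p) :
    Function.Injective fun l : Fin p ↦ Real.sin (2 * Real.pi * (l : ℕ) / p) := by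
  intro l m h
  have h_mod : ((l : ℕ) : ℤ) ≡ (m : ℕ) [ZMOD p] :=
    (sin_two_pi_mul_div_eq_iff hp).mp (by exact_mod_cast h)
  exact Fin.ext ((Int.natCast_modEq_iff.mp h_mod).eq_of_lt_of_lt l.isLt m.isLt)

theorem gpwP_vertical_eq_sum (q : ℕ) (G : ℝ × ℝ) (lam : ℕ × ℕ → ℂ) (t : ℝ) :
    gpwP q G lam (G.1, G.2 + t) = ∑ j ∈ Finset.range (q + 2), lam (0, j) * (t : ℂ) ^ j := by
  simp [gpwP, Finset.sum_range_succ' _ (q + 1)]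

theorem gpwNormalized.gpwP_vertical {q : ℕ} {N : ℂ} {θ : ℝ} {lam : ℕ × ℕ → ℂ}
    (h : gpwNormalized q N θ lam) (G : ℝ × ℝ) (t : ℝ) :
    gpwP q G lam (G.1, G.2 + t) = N * Real.sin θ * t := by
  obtain ⟨h00, -, h01, hvanish⟩ := h
  have higher_eq_zero : ∀ j ∈ Finset.range q, lam (0, j + 2) * (t : ℂ) ^ (j + 2) = 0 := by
    intro j hj
    have hj : j < q := Finset.mem_range.mp hj
    rw [hvanish 0 (j + 2) (by lia) (by lia) (by lia), zero_mul]
  rw [gpwP_vertical_eq_sum, Finset.sum_range_succ', Finset.sum_range_succ',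
    Finset.sum_eq_zero higher_eq_zero]
  simp [h00, h01]

theorem gpw_linearIndependent_general {ι : Type*} {q : ℕ} {N : ι → ℂ} {θ : ι → ℝ} (G : ℝ × ℝ)
    {lam : ι → ℕ × ℕ → ℂ} (hlam : ∀ l, gpwNormalized q (N l) (θ l) (lam l))
    (hinj : Function.Injective fun l ↦ N l * Real.sin (θ l)) :
    LinearIndependent ℂ fun l (z : ℝ × ℝ) ↦ Complex.exp (gpwP q G (lam l) z) := by
  let restrict := LinearMap.funLeft ℂ ℂ fun t : ℝ ↦ (G.1, G.2 + t)
  have restrict_gpw : (restrict ∘ fun l z ↦ Complex.exp (gpwP q G (lam l) z)) =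
      fun l (t : ℝ) ↦ Complex.exp (N l * Real.sin (θ l) * t) := by
    funext l t
    exact congrArg Complex.exp ((hlam l).gpwP_vertical G t)
  refine .of_comp restrict ?_
  rw [restrict_gpw]
  exact linearIndependent_cexp_mul_ofReal.comp _ hinj

/-- The `p = 2n+1` generalized plane waves `φ_l = exp P_l` with data `(G, N, θ_l, q, b)`,
`θ_l = 2π(l-1)/p`, `N ≠ 0`, `q ≥ n+1`, are linearly independent in the `ℂ`-vector space of
functions `ℝ² → ℂ`. -/
theorem gpw_linearIndependent (n q : ℕ) (hn : 1 ≤ n) (hq : n + 1 ≤ q) (b : ℕ × ℕ → ℂ)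
    (N : ℂ) (hN : N ≠ 0) (G : ℝ × ℝ)
    (lam : Fin (2 * n + 1) → ℕ × ℕ → ℂ)
    (hlam : ∀ l : Fin (2 * n + 1), gpwSystem q b (lam l) ∧
      gpwNormalized q N (2 * Real.pi * (l : ℕ) / (2 * n + 1)) (lam l)) :
    LinearIndependent ℂ
      (fun (l : Fin (2 * n + 1)) => fun z : ℝ × ℝ => Complex.exp (gpwP q G (lam l) z)) :=
  gpw_linearIndependent_general G (fun l ↦ (hlam l).2) <| (mul_right_injective₀ hN).comp <|
    Complex.ofReal_injective.comp <| mod_cast sin_two_pi_mul_div_injective (odd_two_mul_add_one n)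
end
end
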